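/- Under the MS-LS model with α_i + α_j = α for all pairs i, j, the second factorial moment of the nodal strength of a node within state k satisfies G̃_k″(1) = E[Y_t(Y_t − 1) | s_t = k] = e^{2α}(N−1)(8σ_k²β + 1)^{−d/2} + (N−1)(N−2) e^{2α} (2σ_k²β + 1)^{−d/2} (6σ_k²β + 1)^{−d/2}, where G̃_k is the conditional probability generating function of the nodal strength given s_t = k. -/

import Mathlib

open MeasureTheory ProbabilityTheory Real

noncomputable section

/-- Density of the centered isotropic Gaussian `N(0, σ² I_d)` on `ℝ^d`. -/
def gaussPdf (d : ℕ) (σ2 : ℝ) (x : EuclideanSpace ℝ (Fin d)) : ℝ :=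
  (2 * Real.pi * σ2) ^ (-(d : ℝ) / 2) * Real.exp (-‖x‖ ^ 2 / (2 * σ2))

/-- The centered isotropic Gaussian measure `N(0, σ² I_d)` on `ℝ^d`. -/
def gaussMeasure (d : ℕ) (σ2 : ℝ) : Measure (EuclideanSpace ℝ (Fin d)) :=
  volume.withDensity fun x => ENNReal.ofReal (gaussPdf d σ2 x)

/-- Unordered pairs of distinct nodes, represented as ordered pairs `(i, j)` with `i < j`. -/
abbrev Pairs (N : ℕ) : Type := {p : Fin N × Fin N // p.1 < p.2}

/-- Joint law of the latent positions `(Z_i)_{i}` (i.i.d. `N(0, σ² I_d)`) and of the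
edge weights `(Y_{ij})_{i<j}`, which given the latent positions are conditionally independent
Poisson variables with intensity `exp (α_i + α_j - β ‖Z_i - Z_j‖²)`. -/
def jointLaw (d N : ℕ) (β : ℝ) (α : Fin N → ℝ) (σ2 : ℝ) :
    Measure ((Fin N → EuclideanSpace ℝ (Fin d)) × (Pairs N → ℕ)) :=
  (volume.withDensity fun z : Fin N → EuclideanSpace ℝ (Fin d) =>
      ENNReal.ofReal (∏ i, gaussPdf d σ2 (z i))).bind fun z =>
    (Measure.pi fun p : Pairs N =>
        poissonMeasure
          (Real.exp (α p.1.1 + α p.1.2 - β * ‖z p.1.1 - z p.1.2‖ ^ 2)).toNNReal).map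
      fun y => (z, y)

/-- The Markov-switching latent space (MS-LS) network model: a hidden `K`-state Markov chain
`s`, state-dependent i.i.d. Gaussian latent positions `Z`, and symmetric edge weights `Y`
that conditionally on the current state (and given the latent positions) are independent
Poisson variables with log-intensity `α i + α j - β ‖Z i k - Z j k‖²`. -/
structure MSLS (Ω : Type) [MeasurableSpace Ω] where
  /-- the underlying probability measure -/
  P : Measure Ω
  isProb : IsProbabilityMeasure P
  /-- the dimension of the latent space -/
  d : ℕ
  /-- the number of nodes -/
  N : ℕ
  /-- the number of states of the hidden Markov chain -/
  K : ℕ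
  β : ℝ
  β_pos : 0 < β
  /-- individual effects -/
  α : Fin N → ℝ
  /-- state-specific variances of the latent positions -/
  σ2 : Fin K → ℝ
  σ2_pos : ∀ k, 0 < σ2 k
  /-- transition probabilities of the hidden Markov chain -/
  q : Fin K → Fin K → ℝ
  q_nonneg : ∀ l k, 0 ≤ q l k
  q_sum : ∀ l, ∑ k, q l k = 1
  /-- the hidden Markov chain -/
  s : ℕ → Ω → Fin K
  s_meas : ∀ t, Measurable (s t)
  /-- the latent positions in each state -/
  Z : Fin N → Fin K → Ω → EuclideanSpace ℝ (Fin d)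
  Z_meas : ∀ i k, Measurable (Z i k)
  /-- the edge weights -/
  Y : Fin N → Fin N → ℕ → Ω → ℕ
  Y_meas : ∀ i j t, Measurable (Y i j t)
  Y_symm : ∀ i j t ω, Y i j t ω = Y j i t ω
  state_pos : ∀ t k, P {ω | s t ω = k} ≠ 0
  /-- Markov transition probabilities -/
  trans_prob : ∀ t l k, ((P[|{ω | s t ω = l}]) {ω | s (t + 1) ω = k}).toReal = q l k
  /-- conditionally on the current state, the latent positions and the edge weights follow
  the Poisson latent space law -/
  cond_law_state : ∀ t k,
    (P[|{ω | s t ω = k}]).map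
        (fun ω => ((fun i => Z i k ω), fun p : Pairs N => Y p.1.1 p.1.2 t ω)) =
      jointLaw d N β α (σ2 k)
  /-- conditionally on the previous and current state, the latent positions and the edge
  weights follow the Poisson latent space law of the current state -/
  cond_law_pair : ∀ t l k, q l k ≠ 0 →
    (P[|{ω | s t ω = l} ∩ {ω | s (t + 1) ω = k}]).map
        (fun ω => ((fun i => Z i k ω), fun p : Pairs N => Y p.1.1 p.1.2 (t + 1) ω)) =
      jointLaw d N β α (σ2 k)

attribute [instance] MSLS.isProb

/-- The nodal strength `Y_{it} = Σ_{j ≠ i} Y_{ijt}` of node `i` at time `t`. -/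
def MSLS.strength {Ω : Type} [MeasurableSpace Ω] (M : MSLS Ω) (i : Fin M.N) (t : ℕ)
    (ω : Ω) : ℕ :=
  ∑ j ∈ Finset.univ.erase i, M.Y i j t ω

end

/-! Given the latent positions `z` in state `k`, the strength of node `i` is a sum of independent
Poisson variables, hence Poisson with intensity `Λᵢ = ∑ j ≠ i, λᵢⱼ`, and its `n`-th factorial moment
is `Λᵢⁿ`. Averaging over `z` gives `E[Λᵢ²] = ∑ j, ∑ l, E[λᵢⱼ λᵢₗ]`. A diagonal term is a Gaussian
integral over two independent positions; an off-diagonal term factorizes given `zᵢ`, so it is the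
second moment of `x ↦ E[exp (-β ‖x - Z‖²)]`. Completing the square shows that this function is
itself a multiple of a Gaussian kernel, so both kinds of terms are explicit. -/

section MixedPoisson

open scoped NNReal ENNReal

lemma hasSum_exp_neg_mul_pow_div_factorial_mul_descFactorial (r : ℝ) (k : ℕ) :
    HasSum (fun n : ℕ => exp (-r) * r ^ n / n.factorial * n.descFactorial k) (r ^ k) := by
  rw [← hasSum_nat_add_iff' k]
  have h_shift : ∀ n : ℕ, exp (-r) * r ^ (n + k) / (n + k).factorial * (n + k).descFactorial k =
      exp (-r) * r ^ k * (r ^ n / n.factorial) := fun n => by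
    have h_fact : (n.factorial : ℝ) * (n + k).descFactorial k = (n + k).factorial := by
      have := Nat.factorial_mul_descFactorial (Nat.le_add_left k n)
      rw [Nat.add_sub_cancel] at this
      exact_mod_cast this
    have h_ne : ((n + k).factorial : ℝ) ≠ 0 := by positivity
    field_simp
    rw [← h_fact]
    ring
  have h_head : ∑ n ∈ Finset.range k,
      exp (-r) * r ^ n / n.factorial * (n.descFactorial k : ℝ) = 0 :=
    Finset.sum_eq_zero fun n hn => by
      simp [Nat.descFactorial_eq_zero_iff_lt.2 (Finset.mem_range.1 hn)]
  have h_exp := (NormedSpace.expSeries_div_hasSum_exp r).mul_left (exp (-r) * r ^ k)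
  rw [← Real.exp_eq_exp_ℝ, mul_right_comm, ← Real.exp_add, neg_add_cancel, Real.exp_zero,
    one_mul] at h_exp
  simpa only [h_shift, h_head, sub_zero] using h_exp

lemma lintegral_descFactorial_poissonMeasure (r : ℝ≥0) (k : ℕ) :
    ∫⁻ n, (n.descFactorial k : ℝ≥0∞) ∂poissonMeasure r = (r : ℝ≥0∞) ^ k := by
  have h_sum := hasSum_exp_neg_mul_pow_div_factorial_mul_descFactorial r k
  calc ∫⁻ n, (n.descFactorial k : ℝ≥0∞) ∂poissonMeasure r
      = ∑' n : ℕ, ENNReal.ofReal (exp (-r) * r ^ n / n.factorial * n.descFactorial k) := by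
        rw [poissonMeasure, lintegral_sum_measure]
        refine tsum_congr fun n => ?_
        rw [lintegral_smul_measure, lintegral_dirac, smul_eq_mul,
          ENNReal.ofReal_mul (by positivity), ENNReal.ofReal_natCast]
    _ = ENNReal.ofReal ((r : ℝ) ^ k) := by
        rw [← ENNReal.ofReal_tsum_of_nonneg (fun n => by positivity) h_sum.summable, h_sum.tsum_eq]
    _ = (r : ℝ≥0∞) ^ k := by
        rw [ENNReal.ofReal_pow r.coe_nonneg, ENNReal.ofReal_coe_nnreal]

lemma poissonMeasure_zero : poissonMeasure 0 = Measure.dirac 0 := by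
  refine Measure.ext_of_singleton fun n => ?_
  rcases n with _ | n <;> simp [poissonMeasure_singleton]

lemma hasLaw_sum_poissonMeasure {Ω ι : Type*} [MeasurableSpace Ω] {P : Measure Ω}
    {X : ι → Ω → ℕ} {r : ι → ℝ≥0} (h_indep : iIndepFun X P) (hX : ∀ i, Measurable (X i))
    (h_law : ∀ i, HasLaw (X i) (poissonMeasure (r i)) P) (S : Finset ι) :
    HasLaw (∑ i ∈ S, X i) (poissonMeasure (∑ i ∈ S, r i)) P := by
  classical
  have := h_indep.isProbabilityMeasure
  induction S using Finset.induction_on with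
  | empty =>
    rw [Finset.sum_empty, Finset.sum_empty, poissonMeasure_zero]
    exact ⟨aemeasurable_const, (Measure.map_const P (0 : ℕ)).trans (by simp)⟩
  | insert i S hi ih =>
    rw [Finset.sum_insert hi, Finset.sum_insert hi, add_comm, add_comm (r i)]
    exact (h_indep.indepFun_finsetSum_of_notMem hX hi).hasLaw_add_poissonMeasure ih (h_law i)

lemma lintegral_descFactorial_sum_pi_poissonMeasure {ι : Type*} [Fintype ι] (r : ι → ℝ≥0)
    (S : Finset ι) (k : ℕ) :
    ∫⁻ y, ((∑ i ∈ S, y i).descFactorial k : ℝ≥0∞) ∂Measure.pi (fun i => poissonMeasure (r i)) =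
      (∑ i ∈ S, (r i : ℝ≥0∞)) ^ k := by
  have h_law := hasLaw_sum_poissonMeasure (iIndepFun_pi (X := fun _ => id) fun _ => aemeasurable_id)
    measurable_pi_apply
    (fun i => (measurePreserving_eval (fun i => poissonMeasure (r i)) i).hasLaw) S
  have h := lintegral_descFactorial_poissonMeasure (∑ i ∈ S, r i) k
  rw [← h_law.map_eq, lintegral_map' Measurable.of_discrete.aemeasurable h_law.aemeasurable] at h
  simpa using h

lemma measurable_poissonMeasure : Measurable poissonMeasure := by
  refine Measure.measurable_of_measurable_coe _ fun s _ => ?_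
  simp only [poissonMeasure, Measure.sum_apply_of_countable, Measure.smul_apply, smul_eq_mul]
  fun_prop

lemma measurable_measure_pi {X ι : Type*} [MeasurableSpace X] [Fintype ι] {E : ι → Type*}
    [∀ i, MeasurableSpace (E i)] {μ : X → (i : ι) → Measure (E i)}
    [∀ x i, IsProbabilityMeasure (μ x i)] (hμ : ∀ i, Measurable fun x => μ x i) :
    Measurable fun x => Measure.pi (μ x) := by
  refine Measurable.measure_of_isPiSystem_of_isProbabilityMeasure generateFrom_pi.symm
    isPiSystem_pi ?_
  rintro _ ⟨s, hs, rfl⟩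
  simp_rw [Measure.pi_pi]
  exact Finset.measurable_prod _ fun i _ =>
    (Measure.measurable_coe (hs i (Set.mem_univ i))).comp (hμ i)

end MixedPoisson

section IndependentSample

lemma pi_withDensity_ofReal {ι : Type*} [Fintype ι] {E : ι → Type*} [∀ i, MeasurableSpace (E i)]
    {μ : ∀ i, Measure (E i)} [∀ i, SigmaFinite (μ i)] {f : ∀ i, E i → ℝ}
    (hf : ∀ i, Integrable (f i) (μ i)) (hf_nonneg : ∀ i x, 0 ≤ f i x) :
    Measure.pi (fun i => (μ i).withDensity fun x => ENNReal.ofReal (f i x)) =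
      (Measure.pi μ).withDensity fun z => ENNReal.ofReal (∏ i, f i (z i)) := by
  have (i : ι) := isFiniteMeasure_withDensity_ofReal (hf i).hasFiniteIntegral
  refine Measure.pi_eq fun s hs => ?_
  rw [withDensity_apply _ (MeasurableSet.univ_pi hs), Measure.restrict_pi_pi,
    ← ofReal_integral_eq_lintegral_ofReal
      (Integrable.fintype_prod_dep fun i => (hf i).restrict)
      (.of_forall fun z => Finset.prod_nonneg fun i _ => hf_nonneg i (z i)),
    integral_fintype_prod_eq_prod,
    ENNReal.ofReal_prod_of_nonneg fun i _ => integral_nonneg (hf_nonneg i)]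
  refine Finset.prod_congr rfl fun i _ => ?_
  rw [withDensity_apply _ (hs i), ofReal_integral_eq_lintegral_ofReal (hf i).restrict
    (.of_forall (hf_nonneg i))]

section Pi

variable {ι : Type*} [Fintype ι] {E : ι → Type*} [∀ i, MeasurableSpace (E i)]
  {μ : ∀ i, Measure (E i)} [∀ i, IsProbabilityMeasure (μ i)]

lemma measurePreserving_eval_prodMk {i j : ι} (hij : i ≠ j) :
    MeasurePreserving (fun z : ∀ i, E i => (z i, z j)) (Measure.pi μ) ((μ i).prod (μ j)) := by
  have h_indep : IndepFun (fun z : ∀ i, E i => z i) (fun z => z j) (Measure.pi μ) :=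
    (iIndepFun_pi (X := fun _ => id) fun _ => aemeasurable_id).indepFun hij
  refine ⟨by fun_prop, ?_⟩
  rw [(indepFun_iff_map_prod_eq_prod_map_map (measurable_pi_apply i).aemeasurable
      (measurable_pi_apply j).aemeasurable).1 h_indep,
    (measurePreserving_eval μ i).map_eq, (measurePreserving_eval μ j).map_eq]

lemma measurePreserving_eval_prodMk_prodMk {i j l : ι} (hij : i ≠ j) (hil : i ≠ l) (hjl : j ≠ l) :
    MeasurePreserving (fun z : ∀ i, E i => (z i, z j, z l)) (Measure.pi μ)
      ((μ i).prod ((μ j).prod (μ l))) := by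
  have h_indep : IndepFun (fun z : ∀ i, E i => z i) (fun z => (z j, z l)) (Measure.pi μ) :=
    ((iIndepFun_pi (X := fun _ => id) fun _ => aemeasurable_id).indepFun_prodMk
      measurable_pi_apply j l i hij.symm hil.symm).symm
  refine ⟨by fun_prop, ?_⟩
  rw [(indepFun_iff_map_prod_eq_prod_map_map (measurable_pi_apply i).aemeasurable
      (by fun_prop)).1 h_indep,
    (measurePreserving_eval μ i).map_eq, (measurePreserving_eval_prodMk hjl).map_eq]

end Pi

variable {ι E : Type*} [Fintype ι] [MeasurableSpace E] {μ : Measure E} [IsProbabilityMeasure μ]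
  {h : E × E → ℝ}

lemma integrable_mul_eval_pi (hh : MemLp h 2 (μ.prod μ)) {i j l : ι} (hij : i ≠ j) (hil : i ≠ l) :
    Integrable (fun z : ι → E => h (z i, z j) * h (z i, z l)) (Measure.pi fun _ => μ) :=
  (hh.comp_measurePreserving (measurePreserving_eval_prodMk hij)).integrable_mul
    (hh.comp_measurePreserving (measurePreserving_eval_prodMk hil))

lemma integral_mul_eval_pi (hh : MemLp h 2 (μ.prod μ)) {i j l : ι} (hij : i ≠ j) (hil : i ≠ l)
    (hjl : j ≠ l) :
    ∫ z : ι → E, h (z i, z j) * h (z i, z l) ∂Measure.pi (fun _ => μ) =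
      ∫ x, (∫ y, h (x, y) ∂μ) ^ 2 ∂μ := by
  have h_triple := measurePreserving_eval_prodMk_prodMk (μ := fun _ : ι => μ) hij hil hjl
  have h_fst : MeasurePreserving (fun p : E × E × E => (p.1, p.2.1)) (μ.prod (μ.prod μ))
      (μ.prod μ) := (MeasurePreserving.id μ).prod measurePreserving_fst
  have h_snd : MeasurePreserving (fun p : E × E × E => (p.1, p.2.2)) (μ.prod (μ.prod μ))
      (μ.prod μ) := (MeasurePreserving.id μ).prod measurePreserving_snd
  have h_int : Integrable (fun p : E × E × E => h (p.1, p.2.1) * h (p.1, p.2.2))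
      (μ.prod (μ.prod μ)) :=
    (hh.comp_measurePreserving h_fst).integrable_mul (hh.comp_measurePreserving h_snd)
  calc ∫ z : ι → E, h (z i, z j) * h (z i, z l) ∂Measure.pi (fun _ => μ)
      = ∫ p, h (p.1, p.2.1) * h (p.1, p.2.2) ∂μ.prod (μ.prod μ) := by
        rw [← h_triple.map_eq, integral_map h_triple.aemeasurable
          (h_triple.map_eq ▸ h_int.aestronglyMeasurable)]
    _ = ∫ x, ∫ q, h (x, q.1) * h (x, q.2) ∂μ.prod μ ∂μ := integral_prod _ h_int
    _ = ∫ x, (∫ y, h (x, y) ∂μ) ^ 2 ∂μ :=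
        integral_congr_ae <| .of_forall fun x => by
          simpa only [pow_two] using integral_prod_mul (fun y => h (x, y)) fun y => h (x, y)

lemma integral_sq_eval_pi (hh : AEStronglyMeasurable h (μ.prod μ)) {i j : ι} (hij : i ≠ j) :
    ∫ z : ι → E, h (z i, z j) ^ 2 ∂Measure.pi (fun _ => μ) = ∫ p, h p ^ 2 ∂μ.prod μ := by
  have h_pair := measurePreserving_eval_prodMk (μ := fun _ : ι => μ) hij
  rw [← h_pair.map_eq, integral_map h_pair.aemeasurable (h_pair.map_eq ▸ hh.pow 2)]

lemma integral_sq_sum_mul_eval_pi [DecidableEq ι] (hh : MemLp h 2 (μ.prod μ)) (w : ι → ℝ) (i : ι) :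
    ∫ z : ι → E, (∑ j ∈ Finset.univ.erase i, w j * h (z i, z j)) ^ 2 ∂Measure.pi (fun _ => μ) =
      (∑ j ∈ Finset.univ.erase i, w j ^ 2) * ∫ p, h p ^ 2 ∂μ.prod μ +
        ((∑ j ∈ Finset.univ.erase i, w j) ^ 2 - ∑ j ∈ Finset.univ.erase i, w j ^ 2) *
          ∫ x, (∫ y, h (x, y) ∂μ) ^ 2 ∂μ := by
  set A := ∫ p, h p ^ 2 ∂μ.prod μ
  set B := ∫ x, (∫ y, h (x, y) ∂μ) ^ 2 ∂μ
  have h_term : ∀ j ∈ Finset.univ.erase i, ∀ l ∈ Finset.univ.erase i,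
      ∫ z : ι → E, h (z i, z j) * h (z i, z l) ∂Measure.pi (fun _ => μ) =
        B + if j = l then A - B else 0 := by
    intro j hj l hl
    split_ifs with hjl
    · subst hjl
      simp_rw [← pow_two, add_sub_cancel]
      exact integral_sq_eval_pi hh.1 (Finset.ne_of_mem_erase hj).symm
    · rw [add_zero]
      exact integral_mul_eval_pi hh (Finset.ne_of_mem_erase hj).symm
        (Finset.ne_of_mem_erase hl).symm hjl
  have h_int : ∀ j ∈ Finset.univ.erase i, ∀ l ∈ Finset.univ.erase i,
      Integrable (fun z : ι → E => w j * w l * (h (z i, z j) * h (z i, z l)))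
        (Measure.pi fun _ => μ) := fun j hj l hl =>
    (integrable_mul_eval_pi hh (Finset.ne_of_mem_erase hj).symm
      (Finset.ne_of_mem_erase hl).symm).const_mul _
  calc ∫ z : ι → E, (∑ j ∈ Finset.univ.erase i, w j * h (z i, z j)) ^ 2 ∂Measure.pi (fun _ => μ)
      = ∑ j ∈ Finset.univ.erase i, ∑ l ∈ Finset.univ.erase i, w j * w l *
          ∫ z : ι → E, h (z i, z j) * h (z i, z l) ∂Measure.pi (fun _ => μ) := by
        simp_rw [pow_two (Finset.sum _ _), Finset.sum_mul_sum, mul_mul_mul_comm (w _)]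
        rw [integral_finsetSum _ fun j hj => integrable_finsetSum _ (h_int j hj)]
        refine Finset.sum_congr rfl fun j hj => ?_
        simp_rw [integral_finsetSum _ (h_int j hj), integral_const_mul]
    _ = ∑ j ∈ Finset.univ.erase i, ∑ l ∈ Finset.univ.erase i,
          w j * w l * (B + if j = l then A - B else 0) :=
        Finset.sum_congr rfl fun j hj => Finset.sum_congr rfl fun l hl => by rw [h_term j hj l hl]
    _ = (∑ j ∈ Finset.univ.erase i, w j) ^ 2 * B +
          (∑ j ∈ Finset.univ.erase i, w j ^ 2) * (A - B) := by
        simp_rw [mul_add, Finset.sum_add_distrib, mul_ite, mul_zero, Finset.sum_ite_eq,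
          pow_two, Finset.sum_mul_sum, Finset.sum_mul]
        congr 1
        exact Finset.sum_congr rfl fun j hj => if_pos hj
    _ = _ := by ring

end IndependentSample

section Gaussian

variable {d : ℕ} {σ2 c : ℝ}

lemma gaussPdf_nonneg (hσ : 0 ≤ σ2) (x : EuclideanSpace ℝ (Fin d)) : 0 ≤ gaussPdf d σ2 x := by
  unfold gaussPdf
  positivity

lemma continuous_gaussPdf : Continuous (gaussPdf d σ2) := by
  unfold gaussPdf
  fun_prop

lemma gaussPdf_eq_mul_exp_neg_mul (x : EuclideanSpace ℝ (Fin d)) :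
    gaussPdf d σ2 x =
      (2 * π * σ2) ^ (-(d : ℝ) / 2) * exp (-(1 / (2 * σ2)) * ‖x‖ ^ 2) := by
  rw [gaussPdf, neg_mul, one_div_mul_eq_div, ← neg_div]

lemma integral_gaussPdf (hσ : 0 < σ2) : ∫ x, gaussPdf d σ2 x = 1 := by
  simp_rw [gaussPdf_eq_mul_exp_neg_mul]
  rw [integral_const_mul, GaussianFourier.integral_rexp_neg_mul_sq_norm (by positivity),
    finrank_euclideanSpace_fin, show π / (1 / (2 * σ2)) = 2 * π * σ2 by field_simp,
    ← rpow_add (by positivity), neg_div, neg_add_cancel, rpow_zero]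

lemma integrable_gaussPdf (hσ : 0 < σ2) : Integrable (gaussPdf d σ2) :=
  .of_integral_ne_zero (by simp [integral_gaussPdf hσ])

lemma isProbabilityMeasure_gaussMeasure (hσ : 0 < σ2) :
    IsProbabilityMeasure (gaussMeasure d σ2) := by
  refine ⟨?_⟩
  rw [gaussMeasure, withDensity_apply _ MeasurableSet.univ, Measure.restrict_univ,
    ← ofReal_integral_eq_lintegral_ofReal (integrable_gaussPdf hσ)
      (.of_forall (gaussPdf_nonneg hσ.le)), integral_gaussPdf hσ, ENNReal.ofReal_one]

lemma integral_gaussMeasure (hσ : 0 ≤ σ2) (f : EuclideanSpace ℝ (Fin d) → ℝ) :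
    ∫ x, f x ∂gaussMeasure d σ2 = ∫ x, gaussPdf d σ2 x * f x := by
  rw [gaussMeasure, integral_withDensity_eq_integral_toReal_smul
    continuous_gaussPdf.measurable.ennreal_ofReal (by simp)]
  simp only [ENNReal.toReal_ofReal (gaussPdf_nonneg hσ _), smul_eq_mul]

lemma pi_gaussMeasure {ι : Type*} [Fintype ι] (hσ : 0 < σ2) :
    Measure.pi (fun _ : ι => gaussMeasure d σ2) =
      volume.withDensity fun z => ENNReal.ofReal (∏ i, gaussPdf d σ2 (z i)) :=
  pi_withDensity_ofReal (fun _ => integrable_gaussPdf hσ) fun _ => gaussPdf_nonneg hσ.le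

-- Completing the square in `x`: a Gaussian observation at `z` divides the variance by `2cσ² + 1`.
lemma gaussPdf_mul_exp_neg_mul_sq_norm_sub (hσ : 0 < σ2) (hD : 0 < 2 * σ2 * c + 1)
    (z x : EuclideanSpace ℝ (Fin d)) :
    gaussPdf d σ2 x * exp (-c * ‖z - x‖ ^ 2) =
      (2 * σ2 * c + 1) ^ (-(d : ℝ) / 2) * exp (-(c / (2 * σ2 * c + 1)) * ‖z‖ ^ 2) *
        gaussPdf d (σ2 / (2 * σ2 * c + 1)) (x - (2 * σ2 * c / (2 * σ2 * c + 1)) • z) := by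
  have h_const : (2 * π * σ2) ^ (-(d : ℝ) / 2) = (2 * σ2 * c + 1) ^ (-(d : ℝ) / 2) *
      (2 * π * (σ2 / (2 * σ2 * c + 1))) ^ (-(d : ℝ) / 2) := by
    rw [← mul_rpow hD.le (by positivity)]
    congr 1
    field_simp
  have h_exponent : -‖x‖ ^ 2 / (2 * σ2) + -c * ‖z - x‖ ^ 2 =
      -(c / (2 * σ2 * c + 1)) * ‖z‖ ^ 2 +
        -‖x - (2 * σ2 * c / (2 * σ2 * c + 1)) • z‖ ^ 2 / (2 * (σ2 / (2 * σ2 * c + 1))) := by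
    rw [norm_sub_sq_real, norm_sub_sq_real, inner_smul_right, norm_smul, real_inner_comm, mul_pow,
      norm_eq_abs, sq_abs]
    field_simp
    ring
  rw [gaussPdf, gaussPdf, mul_assoc, ← exp_add, h_exponent, exp_add, h_const]
  ring

lemma integral_exp_neg_mul_sq_norm_sub_gaussMeasure (hσ : 0 < σ2) (hD : 0 < 2 * σ2 * c + 1)
    (z : EuclideanSpace ℝ (Fin d)) :
    ∫ x, exp (-c * ‖z - x‖ ^ 2) ∂gaussMeasure d σ2 =
      (2 * σ2 * c + 1) ^ (-(d : ℝ) / 2) * exp (-(c / (2 * σ2 * c + 1)) * ‖z‖ ^ 2) := by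
  simp_rw [integral_gaussMeasure hσ.le, gaussPdf_mul_exp_neg_mul_sq_norm_sub hσ hD z]
  rw [integral_const_mul, integral_sub_right_eq_self (gaussPdf d _),
    integral_gaussPdf (by positivity), mul_one]

lemma integral_exp_neg_mul_sq_norm_gaussMeasure (hσ : 0 < σ2) (hD : 0 < 2 * σ2 * c + 1) :
    ∫ x, exp (-c * ‖x‖ ^ 2) ∂gaussMeasure d σ2 = (2 * σ2 * c + 1) ^ (-(d : ℝ) / 2) := by
  simpa using integral_exp_neg_mul_sq_norm_sub_gaussMeasure hσ hD 0

lemma integral_pow_integral_exp_neg_mul_sq_norm_sub_gaussMeasure (hσ : 0 < σ2) (hc : 0 ≤ c)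
    (n : ℕ) :
    ∫ x, (∫ y, exp (-c * ‖x - y‖ ^ 2) ∂gaussMeasure d σ2) ^ (n + 1) ∂gaussMeasure d σ2 =
      ((2 * σ2 * c + 1) ^ (-(d : ℝ) / 2)) ^ n * (2 * (n + 2) * σ2 * c + 1) ^ (-(d : ℝ) / 2) := by
  have hD : 0 < 2 * σ2 * c + 1 := by positivity
  have h_exp (x : EuclideanSpace ℝ (Fin d)) :
      exp (-(c / (2 * σ2 * c + 1)) * ‖x‖ ^ 2) ^ (n + 1) =
        exp (-((n + 1) * c / (2 * σ2 * c + 1)) * ‖x‖ ^ 2) := by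
    rw [← exp_nat_mul]
    congr 1
    push_cast
    ring
  simp_rw [integral_exp_neg_mul_sq_norm_sub_gaussMeasure hσ hD, mul_pow, h_exp]
  rw [integral_const_mul, integral_exp_neg_mul_sq_norm_gaussMeasure hσ (by positivity), pow_succ,
    mul_assoc, ← mul_rpow hD.le (by positivity)]
  congr 2
  field_simp
  ring

lemma memLp_exp_neg_mul_sq_norm_sub {E : Type*} [NormedAddCommGroup E] [MeasurableSpace E]
    [BorelSpace E] [SecondCountableTopology E] {μ : Measure (E × E)} [IsFiniteMeasure μ]
    (hc : 0 ≤ c) (p : ENNReal) :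
    MemLp (fun x : E × E => exp (-c * ‖x.1 - x.2‖ ^ 2)) p μ := by
  refine .of_bound (by fun_prop) 1 (.of_forall fun x => ?_)
  rw [norm_eq_abs, abs_exp, exp_le_one_iff, neg_mul, neg_nonpos]
  positivity

lemma integral_sq_exp_neg_mul_sq_norm_sub_prod_gaussMeasure (hσ : 0 < σ2) (hc : 0 ≤ c) :
    ∫ p, exp (-c * ‖p.1 - p.2‖ ^ 2) ^ 2 ∂(gaussMeasure d σ2).prod (gaussMeasure d σ2) =
      (8 * σ2 * c + 1) ^ (-(d : ℝ) / 2) := by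
  have := isProbabilityMeasure_gaussMeasure (d := d) hσ
  have h_sq (p : EuclideanSpace ℝ (Fin d) × EuclideanSpace ℝ (Fin d)) :
      exp (-c * ‖p.1 - p.2‖ ^ 2) ^ 2 = exp (-(2 * c) * ‖p.1 - p.2‖ ^ 2) := by
    rw [← exp_nat_mul]
    congr 1
    push_cast
    ring
  have h_pow := integral_pow_integral_exp_neg_mul_sq_norm_sub_gaussMeasure (d := d) hσ
    (mul_nonneg zero_le_two hc) 0
  simp_rw [h_sq]
  rw [integral_prod _ ((memLp_exp_neg_mul_sq_norm_sub (by positivity) 1).integrable le_rfl)]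
  simp only [zero_add, pow_one, pow_zero, one_mul] at h_pow
  rw [h_pow]
  congr 1
  push_cast
  ring

lemma integral_sq_integral_exp_neg_mul_sq_norm_sub_gaussMeasure (hσ : 0 < σ2) (hc : 0 ≤ c) :
    ∫ x, (∫ y, exp (-c * ‖x - y‖ ^ 2) ∂gaussMeasure d σ2) ^ 2 ∂gaussMeasure d σ2 =
      (2 * σ2 * c + 1) ^ (-(d : ℝ) / 2) * (6 * σ2 * c + 1) ^ (-(d : ℝ) / 2) := by
  rw [integral_pow_integral_exp_neg_mul_sq_norm_sub_gaussMeasure hσ hc 1, pow_one]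
  congr 2
  push_cast
  ring

end Gaussian

section Model

open scoped NNReal ENNReal

variable {d N : ℕ}

/-- The Poisson intensity `λ_{ij}` of the edge between two nodes given the latent positions `z`,
as a nonnegative real because `poissonMeasure` is parametrized by `ℝ≥0`. -/
noncomputable def edgeIntensity (β : ℝ) (α : Fin N → ℝ) (z : Fin N → EuclideanSpace ℝ (Fin d))
    (i j : Fin N) : ℝ≥0 :=
  (exp (α i + α j - β * ‖z i - z j‖ ^ 2)).toNNReal

lemma edgeIntensity_comm (β : ℝ) (α : Fin N → ℝ) (z : Fin N → EuclideanSpace ℝ (Fin d))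
    (i j : Fin N) : edgeIntensity β α z i j = edgeIntensity β α z j i := by
  rw [edgeIntensity, edgeIntensity, add_comm (α i), norm_sub_rev]

lemma coe_edgeIntensity (β : ℝ) (α : Fin N → ℝ) (z : Fin N → EuclideanSpace ℝ (Fin d))
    (i j : Fin N) :
    (edgeIntensity β α z i j : ℝ) = exp (α i + α j) * exp (-β * ‖z i - z j‖ ^ 2) := by
  rw [edgeIntensity, coe_toNNReal _ (exp_pos _).le, ← exp_add, neg_mul, sub_eq_add_neg]

lemma measurable_edgeIntensity (β : ℝ) (α : Fin N → ℝ) (i j : Fin N) :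
    Measurable fun z : Fin N → EuclideanSpace ℝ (Fin d) => edgeIntensity β α z i j := by
  unfold edgeIntensity
  fun_prop

/-- The conditional law of the edge weights given the latent positions. -/
noncomputable def edgeKernel (d : ℕ) (β : ℝ) (α : Fin N → ℝ) :
    Kernel (Fin N → EuclideanSpace ℝ (Fin d)) (Pairs N → ℕ) where
  toFun z := Measure.pi fun p => poissonMeasure (edgeIntensity β α z p.1.1 p.1.2)
  measurable' := measurable_measure_pi fun p =>
    measurable_poissonMeasure.comp (measurable_edgeIntensity β α p.1.1 p.1.2)

lemma edgeKernel_apply (β : ℝ) (α : Fin N → ℝ) (z : Fin N → EuclideanSpace ℝ (Fin d)) :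
    edgeKernel d β α z =
      Measure.pi fun p => poissonMeasure (edgeIntensity β α z p.1.1 p.1.2) := rfl

instance (β : ℝ) (α : Fin N → ℝ) : IsMarkovKernel (edgeKernel d β α) :=
  ⟨fun z => by rw [edgeKernel_apply]; infer_instance⟩

lemma jointLaw_eq_compProd (β : ℝ) (α : Fin N → ℝ) {σ2 : ℝ} (hσ : 0 < σ2) :
    jointLaw d N β α σ2 = (Measure.pi fun _ => gaussMeasure d σ2) ⊗ₘ edgeKernel d β α := by
  have := isProbabilityMeasure_gaussMeasure (d := d) hσ
  rw [Measure.compProd_eq_comp_prod, pi_gaussMeasure hσ, jointLaw]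
  congr 1
  ext1 z
  rw [Kernel.prod_apply, Kernel.id_apply, Measure.dirac_prod, edgeKernel_apply]
  rfl

/-- The unordered pairs of nodes that contain the node `i`. -/
def incidentPairs (i : Fin N) : Finset (Pairs N) :=
  Finset.univ.filter fun p => p.1.1 = i ∨ p.1.2 = i

lemma sum_incidentPairs {γ : Type*} [AddCommMonoid γ] {F : Fin N → Fin N → γ}
    (hF : ∀ i j, F i j = F j i) (i : Fin N) :
    ∑ p ∈ incidentPairs i, F p.1.1 p.1.2 = ∑ j ∈ Finset.univ.erase i, F i j := by
  refine Finset.sum_bij (fun p _ => if p.1.1 = i then p.1.2 else p.1.1) ?_ ?_ ?_ ?_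
  · rintro ⟨⟨j, l⟩, hjl⟩ _
    grind [incidentPairs]
  · rintro ⟨⟨j, l⟩, hjl⟩ hp ⟨⟨j', l'⟩, hjl'⟩ hp' h
    grind [incidentPairs]
  · intro j hj
    rcases lt_or_gt_of_ne (Finset.ne_of_mem_erase hj) with h | h
    · exact ⟨⟨(j, i), h⟩, by simp [incidentPairs], if_neg h.ne⟩
    · exact ⟨⟨(i, j), h⟩, by simp [incidentPairs], if_pos rfl⟩
  · rintro ⟨⟨j, l⟩, hjl⟩ hp
    grind [incidentPairs]

namespace MSLS

variable {Ω : Type} [MeasurableSpace Ω] (M : MSLS Ω)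

lemma measurable_positions_edges (t : ℕ) (k : Fin M.K) :
    Measurable fun ω => ((fun i => M.Z i k ω), fun p : Pairs M.N => M.Y p.1.1 p.1.2 t ω) :=
  (measurable_pi_lambda _ fun i => M.Z_meas i k).prodMk
    (measurable_pi_lambda _ fun p => M.Y_meas p.1.1 p.1.2 t)

lemma measurable_strength (i : Fin M.N) (t : ℕ) : Measurable (M.strength i t) :=
  Finset.measurable_sum _ fun j _ => M.Y_meas i j t

lemma strength_eq_sum_incidentPairs (i : Fin M.N) (t : ℕ) (ω : Ω) :
    M.strength i t ω = ∑ p ∈ incidentPairs i, M.Y p.1.1 p.1.2 t ω :=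
  (sum_incidentPairs (F := fun i j => M.Y i j t ω) (fun i j => M.Y_symm i j t ω) i).symm

lemma lintegral_descFactorial_strength (n : ℕ) (i : Fin M.N) (t : ℕ) (k : Fin M.K) :
    ∫⁻ ω, ((M.strength i t ω).descFactorial n : ℝ≥0∞) ∂M.P[|{ω | M.s t ω = k}] =
      ∫⁻ z, (∑ j ∈ Finset.univ.erase i, (edgeIntensity M.β M.α z i j : ℝ≥0∞)) ^ n
        ∂Measure.pi fun _ => gaussMeasure M.d (M.σ2 k) := by
  have := isProbabilityMeasure_gaussMeasure (d := M.d) (M.σ2_pos k)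
  calc ∫⁻ ω, ((M.strength i t ω).descFactorial n : ℝ≥0∞) ∂M.P[|{ω | M.s t ω = k}]
      = ∫⁻ p, ((∑ e ∈ incidentPairs i, p.2 e).descFactorial n : ℝ≥0∞)
          ∂jointLaw M.d M.N M.β M.α (M.σ2 k) := by
        rw [← M.cond_law_state t k, lintegral_map (by fun_prop) (M.measurable_positions_edges t k)]
        simp_rw [strength_eq_sum_incidentPairs]
    _ = ∫⁻ z, ∫⁻ y, ((∑ e ∈ incidentPairs i, y e).descFactorial n : ℝ≥0∞)
          ∂edgeKernel M.d M.β M.α z ∂Measure.pi fun _ => gaussMeasure M.d (M.σ2 k) := by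
        rw [jointLaw_eq_compProd M.β M.α (M.σ2_pos k), Measure.lintegral_compProd (by fun_prop)]
    _ = _ := by
        refine lintegral_congr fun z => ?_
        rw [edgeKernel_apply, lintegral_descFactorial_sum_pi_poissonMeasure,
          sum_incidentPairs (F := fun i j => (edgeIntensity M.β M.α z i j : ℝ≥0∞))
            fun i j => by rw [edgeIntensity_comm]]

lemma integral_descFactorial_strength (n : ℕ) (i : Fin M.N) (t : ℕ) (k : Fin M.K) :
    ∫ ω, ((M.strength i t ω).descFactorial n : ℝ) ∂M.P[|{ω | M.s t ω = k}] =
      ∫ z, (∑ j ∈ Finset.univ.erase i, exp (M.α i + M.α j) * exp (-M.β * ‖z i - z j‖ ^ 2)) ^ n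
        ∂Measure.pi fun _ => gaussMeasure M.d (M.σ2 k) := by
  have h := congrArg ENNReal.toReal (M.lintegral_descFactorial_strength n i t k)
  have h_meas := fun j => measurable_edgeIntensity (d := M.d) M.β M.α i j
  rw [← integral_toReal (by have := M.measurable_strength i t; fun_prop)
      (.of_forall fun ω => by simp),
    ← integral_toReal (by fun_prop)
      (.of_forall fun z =>
        ENNReal.pow_lt_top (ENNReal.sum_lt_top.2 fun j _ => ENNReal.coe_lt_top))] at h
  simpa [coe_edgeIntensity, ENNReal.toReal_sum] using h

end MSLS

end Model

theorem statement11_general {Ω : Type} [MeasurableSpace Ω] (M : MSLS Ω) (i : Fin M.N) (t : ℕ)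
    (k : Fin M.K) :
    ∫ ω, (Nat.descFactorial (M.strength i t ω) 2 : ℝ) ∂(M.P[|{ω | M.s t ω = k}]) =
      (∑ j ∈ Finset.univ.erase i, exp (M.α i + M.α j) ^ 2) *
          (8 * M.σ2 k * M.β + 1) ^ (-(M.d : ℝ) / 2) +
        ((∑ j ∈ Finset.univ.erase i, exp (M.α i + M.α j)) ^ 2 -
            ∑ j ∈ Finset.univ.erase i, exp (M.α i + M.α j) ^ 2) *
          ((2 * M.σ2 k * M.β + 1) ^ (-(M.d : ℝ) / 2) *
            (6 * M.σ2 k * M.β + 1) ^ (-(M.d : ℝ) / 2)) := by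
  have := isProbabilityMeasure_gaussMeasure (d := M.d) (M.σ2_pos k)
  have h_memLp := memLp_exp_neg_mul_sq_norm_sub (E := EuclideanSpace ℝ (Fin M.d))
    (μ := (gaussMeasure M.d (M.σ2 k)).prod (gaussMeasure M.d (M.σ2 k))) M.β_pos.le 2
  rw [M.integral_descFactorial_strength, integral_sq_sum_mul_eval_pi h_memLp,
    integral_sq_exp_neg_mul_sq_norm_sub_prod_gaussMeasure (M.σ2_pos k) M.β_pos.le,
    integral_sq_integral_exp_neg_mul_sq_norm_sub_gaussMeasure (M.σ2_pos k) M.β_pos.le]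

/-- Under the MS-LS model with `α_i + α_j = α` for all pairs, the second
factorial moment of the nodal strength within state `k`
(i.e. `G̃_k''(1) = E[Y_t (Y_t - 1) | s_t = k]`) equals
`e^{2α}(N-1)(8σ_k²β + 1)^{-d/2} + (N-1)(N-2) e^{2α} (2σ_k²β + 1)^{-d/2} (6σ_k²β + 1)^{-d/2}`. -/
theorem statement11 {Ω : Type} [MeasurableSpace Ω] (M : MSLS Ω) (a : ℝ)
    (hα : ∀ i j, M.α i + M.α j = a) (i : Fin M.N) (t : ℕ) (k : Fin M.K) :
    ∫ ω, (Nat.descFactorial (M.strength i t ω) 2 : ℝ) ∂(M.P[|{ω | M.s t ω = k}]) =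
      Real.exp (2 * a) * ((M.N : ℝ) - 1) * (8 * M.σ2 k * M.β + 1) ^ (-(M.d : ℝ) / 2) +
        ((M.N : ℝ) - 1) * ((M.N : ℝ) - 2) * Real.exp (2 * a) *
          (2 * M.σ2 k * M.β + 1) ^ (-(M.d : ℝ) / 2) *
          (6 * M.σ2 k * M.β + 1) ^ (-(M.d : ℝ) / 2) := by
  simp only [statement11_general, hα, Finset.sum_const, Finset.card_erase_of_mem, Finset.mem_univ,
    Finset.card_univ, Fintype.card_fin, nsmul_eq_mul, Nat.cast_pred (Fin.pos i), two_mul a, exp_add]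
  ring
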